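/- Principal specialization: assume the parameters t, t_0 are real with 0 < t < 1 and 0 < t_0 < 1, and that all denominators occurring in c_λ and in C_λ(w·iρ) (w ∈ W_n) are nonzero, where ρ = Σ_{1≤j≤n} (log(t_0) + (n−j) log(t)) e_j ∈ ℝ^n. Then for every λ ∈ Λ one has P_λ(iρ) = 1, i.e., the hyperoctahedral Hall–Littlewood function has unit principal specialization value. -/

import Mathlib

open Finset Complex MeasureTheory

noncomputable section

namespace QB

/-- The partition predicate: `lam` is weakly decreasing with nonnegative parts. -/
def IsPart (n : ℕ) (lam : Fin n → ℤ) : Prop :=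
  (∀ i j : Fin n, i ≤ j → lam j ≤ lam i) ∧ ∀ i, 0 ≤ lam i

instance (n : ℕ) (lam : Fin n → ℤ) : Decidable (IsPart n lam) := by
  unfold IsPart; infer_instance

/-- The cone `Λ` of partitions with at most `n` parts. -/
def Lam (n : ℕ) := {lam : Fin n → ℤ // IsPart n lam}

/-- `λ + e_{J+} - e_{J-}`. -/
def shift (n : ℕ) (lam : Fin n → ℤ) (Jp Jm : Finset (Fin n)) : Fin n → ℤ :=
  fun i => lam i + (if i ∈ Jp then 1 else 0) - (if i ∈ Jm then 1 else 0)

/-- `ε_j(J+, J-)`. -/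
def eps (n : ℕ) (Jp Jm : Finset (Fin n)) (i : Fin n) : ℤ :=
  if i ∈ Jp then 1 else if i ∈ Jm then -1 else 0

/-- the exponent `n - j` in paper indexing (`j = (i : ℕ) + 1`). -/
def en (n : ℕ) (i : Fin n) : ℤ := (n : ℤ) - (i : ℤ) - 1

/-- `t^{n-j}` in paper indexing. -/
def tn (n : ℕ) (t : ℂ) (i : Fin n) : ℂ := t ^ en n i

/-- the ratio `(1-t^{1+k-j})/(1-t^{k-j})` in paper indexing. -/
def rat (n : ℕ) (t : ℂ) (j k : Fin n) : ℂ :=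
  (1 - t ^ ((k : ℤ) - (j : ℤ) + 1)) / (1 - t ^ ((k : ℤ) - (j : ℤ)))

/-- `∏_{1 ≤ j < k ≤ n, λ_j = λ_k, ε_j > ε_k} (1-t^{1+k-j})/(1-t^{k-j})`. -/
def pairProd (n : ℕ) (t : ℂ) (lam : Fin n → ℤ) (Jp Jm : Finset (Fin n)) : ℂ :=
  ∏ j : Fin n, ∏ k : Fin n,
    if j < k ∧ lam j = lam k ∧ eps n Jp Jm j > eps n Jp Jm k then rat n t j k else 1

/-- the coefficient `W_{J+,J-}(λ)` (three-parameter case). -/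
def W3 (n : ℕ) (t t0 t1 t2 : ℂ) (lam : Fin n → ℤ) (Jp Jm : Finset (Fin n)) : ℂ :=
  (∏ j ∈ Jp, if lam j = 0 then
      (1 - t0 * t1 * tn n t j) * (1 - t0 * t2 * tn n t j) * (1 - t1 * t2 * tn n t j) else 1)
  * pairProd n t lam Jp Jm

/-- the coefficient `U_{K,m}(λ)` (three-parameter case). -/
def U3 (n : ℕ) (t t0 t1 t2 : ℂ) (K : Finset (Fin n)) (m : ℕ) (lam : Fin n → ℤ) : ℂ :=
  (-1 : ℂ) ^ m *
  ∑ p ∈ (univ : Finset (Finset (Fin n) × Finset (Fin n))).filter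
      (fun p => p.1 ⊆ K ∧ p.2 ⊆ K ∧ Disjoint p.1 p.2 ∧ p.1.card + p.2.card = m),
    (∏ j ∈ p.1, if lam j = 0 then (1 - t0 * t1 * tn n t j) * (1 - t0 * t2 * tn n t j) else 1) *
    (∏ j ∈ p.2, if lam j = 1 then 1 - t1 * t2 * tn n t j else 1) *
    (∏ j ∈ K, ∏ k ∈ K,
        if lam j = lam k ∧ eps n p.1 p.2 j > eps n p.1 p.2 k then rat n t j k else 1) *
    (∏ j ∈ p.2, ∏ k ∈ p.1, if lam j = lam k + 1 then rat n t j k else 1) *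
    (∏ j ∈ K, t0 ^ (-(eps n p.1 p.2 j))) *
    (∏ j ∈ K, ∏ k ∈ K,
        if j < k ∧ eps n p.1 p.2 j ≠ eps n p.1 p.2 k ∧ eps n p.1 p.2 k = 0
        then t ^ (-(eps n p.1 p.2 j)) else 1) *
    (∏ j ∈ K, ∏ k ∈ K,
        if j < k ∧ lam j = lam k ∧ eps n p.1 p.2 k - eps n p.1 p.2 j = 1 then t⁻¹ else 1)

/-- the difference operator `H_l` (three-parameter case). -/
def H3 (n : ℕ) (t t0 t1 t2 : ℂ) (l : ℕ) (f : Lam n → ℂ) : Lam n → ℂ := fun lam =>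
  ∑ p ∈ (univ : Finset (Finset (Fin n) × Finset (Fin n))).filter
      (fun p => Disjoint p.1 p.2 ∧ p.1.card + p.2.card ≤ l),
    if h : IsPart n (shift n lam.1 p.1 p.2) then
      U3 n t t0 t1 t2 (p.1ᶜ ∩ p.2ᶜ) (l - (p.1.card + p.2.card)) lam.1 *
      W3 n t t0 t1 t2 lam.1 p.1 p.2 * f ⟨_, h⟩
    else 0

/-- the Pieri coefficient `V_{J+,J-}(λ)` (three-parameter case). -/
def V3 (n : ℕ) (t t0 t1 t2 : ℂ) (lam : Fin n → ℤ) (Jp Jm : Finset (Fin n)) : ℂ :=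
  (∏ j ∈ Jp, if lam j = 0 then (1 - t0 * t1 * tn n t j) * (1 - t0 * t2 * tn n t j) else 1) *
  (∏ j ∈ Jm, if lam j = 1 then 1 - t1 * t2 * tn n t j else 1) *
  pairProd n t lam Jp Jm *
  ∏ j : Fin n, t0 ^ (-(eps n Jp Jm j)) * t ^ (-(en n j * eps n Jp Jm j))

/-- the gauge function `h(λ)` (three-parameter case). -/
def h3 (n : ℕ) (t t0 t1 t2 : ℂ) (lam : Fin n → ℤ) : ℂ :=
  ∏ j : Fin n, if 0 < lam j then
    t0 ^ (lam j) * t ^ (en n j * lam j) * (1 - t1 * t2 * tn n t j) else 1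

/-- action of the hyperoctahedral group `W_n = S_n ⋉ {-1,1}^n` on `ξ ∈ ℂ^n`. -/
def act (n : ℕ) (w : Equiv.Perm (Fin n) × (Fin n → Bool)) (xi : Fin n → ℂ) : Fin n → ℂ :=
  fun j => (if w.2 j then -1 else 1) * xi (w.1 j)

/-- the factor `C_λ(ξ)`. -/
def Cf (n : ℕ) (t t0 t1 t2 t3 : ℂ) (lam : Fin n → ℤ) (xi : Fin n → ℂ) : ℂ :=
  (∏ j : Fin n, ∏ k : Fin n, if j < k then
      ((1 - t * exp (I * (xi j - xi k))) * (1 - t * exp (I * (xi j + xi k)))) /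
      ((1 - exp (I * (xi j - xi k))) * (1 - exp (I * (xi j + xi k)))) else 1) *
  ∏ j : Fin n, if 0 < lam j then
      ((1 - t0 * exp (I * xi j)) * (1 - t1 * exp (I * xi j)) *
       (1 - t2 * exp (I * xi j)) * (1 - t3 * exp (I * xi j))) / (1 - exp (2 * I * xi j))
    else 1

/-- the normalization constant `c_λ`. -/
def ccf (n : ℕ) (t t0 t1 t2 t3 : ℂ) (lam : Fin n → ℤ) : ℂ :=
  ∏ j : Fin n,
    (t0 ^ (lam j) * t ^ (en n j * lam j) * (1 - t)) /
    ((1 - t ^ ((j : ℤ) + 1)) * (if lam j = 0 then 1 + tn n t j else 1) *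
     (if lam j = 0 then 1 else
        (1 - t0 * t1 * tn n t j) * (1 - t0 * t2 * tn n t j) * (1 - t0 * t3 * tn n t j)))

/-- the hyperoctahedral Hall–Littlewood function `P_λ(ξ)`. -/
def P (n : ℕ) (t t0 t1 t2 t3 : ℂ) (lam : Fin n → ℤ) (xi : Fin n → ℂ) : ℂ :=
  ccf n t t0 t1 t2 t3 lam *
  ∑ w : Equiv.Perm (Fin n) × (Fin n → Bool),
    Cf n t t0 t1 t2 t3 lam (act n w xi) *
    exp (-I * ∑ j : Fin n, (lam j : ℂ) * act n w xi j)

/-- the symmetric function `E_l(ξ)` (eigenvalue). -/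
def E (n : ℕ) (t t0 : ℂ) (l : ℕ) (xi : Fin n → ℂ) : ℂ :=
  ∑ S ∈ Finset.powersetCard l (univ : Finset (Fin n)),
    if h : S.card = l then
      ∏ k : Fin l,
        (2 * Complex.cos (xi ((S.orderIsoOfFin h k).1)) -
         t0 * t ^ ((((S.orderIsoOfFin h k).1 : ℕ) : ℤ) - (k : ℤ)) -
         t0⁻¹ * t ^ (-((((S.orderIsoOfFin h k).1 : ℕ) : ℤ) - (k : ℤ))))
    else 0

/-- `ξ` is generic: all factors `C_μ(wξ)` are defined (no vanishing denominators). -/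
def Generic (n : ℕ) (xi : Fin n → ℂ) : Prop :=
  ∀ w : Equiv.Perm (Fin n) × (Fin n → Bool),
    (∀ j k : Fin n, j < k →
      1 - exp (I * (act n w xi j - act n w xi k)) ≠ 0 ∧
      1 - exp (I * (act n w xi j + act n w xi k)) ≠ 0) ∧
    ∀ j : Fin n, 1 - exp (2 * I * act n w xi j) ≠ 0

/-- the weight function `Δ(ξ)`. -/
def Dlt (n : ℕ) (t t0 t1 t2 t3 : ℂ) (xi : Fin n → ℂ) : ℂ :=
  (∏ j : Fin n, ∏ k : Fin n, if j < k then
      ((1 - exp (I * (xi j - xi k))) * (1 - exp (I * (xi j + xi k)))) /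
      ((1 - t * exp (I * (xi j - xi k))) * (1 - t * exp (I * (xi j + xi k)))) else 1) *
  ∏ j : Fin n, (1 - exp (2 * I * xi j)) /
    ((1 - t0 * exp (I * xi j)) * (1 - t1 * exp (I * xi j)) *
     (1 - t2 * exp (I * xi j)) * (1 - t3 * exp (I * xi j)))

/-- `m_0(λ)`. -/
def m0c (n : ℕ) (lam : Fin n → ℤ) : ℕ := (univ.filter fun j => lam j = 0).card

/-- `m_1(λ)`. -/
def m1c (n : ℕ) (lam : Fin n → ℤ) : ℕ := (univ.filter fun j => lam j = 1).card

/-- `m_1^+(λ)` relative to `J_+`. -/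
def m1p (n : ℕ) (lam : Fin n → ℤ) (Jp : Finset (Fin n)) : ℕ :=
  (Jp.filter fun j => lam j = 1).card

/-- the Pieri coefficient `V_{J+,J-}(λ)` (four-parameter case). -/
def V4 (n : ℕ) (t t0 t1 t2 t3 : ℂ) (lam : Fin n → ℤ) (Jp Jm : Finset (Fin n)) : ℂ :=
  (∏ j ∈ Jp, if lam j = 0 then
      ((1 - t0*t1*t2*t3 * t ^ (en n j + (m0c n lam : ℤ) + (m1c n lam : ℤ) - (m1p n lam Jp : ℤ))) *
       ((1 - t0 * t1 * tn n t j) * (1 - t0 * t2 * tn n t j) * (1 - t0 * t3 * tn n t j))) /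
      ((1 - t0*t1*t2*t3 * t ^ (2 * en n j)) * (1 - t0*t1*t2*t3 * t ^ (2 * en n j + 1)))
    else 1) *
  (∏ j ∈ Jp, if lam j = 1 then 1 - t0*t1*t2*t3 * t ^ (en n j + (m0c n lam : ℤ)) else 1) *
  (∏ j ∈ Jm, if lam j = 1 then
      ((1 - t0*t1*t2*t3 * t ^ (en n j - 1)) *
       ((1 - t1 * t2 * tn n t j) * (1 - t1 * t3 * tn n t j) * (1 - t2 * t3 * tn n t j))) /
      ((1 - t0*t1*t2*t3 * t ^ (2 * en n j)) * (1 - t0*t1*t2*t3 * t ^ (2 * en n j - 1)))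
    else 1) *
  pairProd n t lam Jp Jm *
  ∏ j : Fin n, t0 ^ (-(eps n Jp Jm j)) * t ^ (-(en n j * eps n Jp Jm j))

/-- the coefficient `U_{K,m}(λ)` (four-parameter case). -/
def U4 (n : ℕ) (t t0 t1 t2 t3 : ℂ) (K : Finset (Fin n)) (m : ℕ) (lam : Fin n → ℤ) : ℂ :=
  (-1 : ℂ) ^ m *
  ∑ p ∈ (univ : Finset (Finset (Fin n) × Finset (Fin n))).filter
      (fun p => p.1 ⊆ K ∧ p.2 ⊆ K ∧ Disjoint p.1 p.2 ∧ p.1.card + p.2.card = m),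
    (∏ j ∈ p.1, if lam j = 0 then
        ((1 - t0 * t1 * tn n t j) * (1 - t0 * t2 * tn n t j) * (1 - t0 * t3 * tn n t j)) /
        (1 - t0*t1*t2*t3 * t ^ (2 * en n j)) else 1) *
    (∏ j ∈ p.1, if lam j = 1 then 1 - t0*t1*t2*t3 * t ^ (en n j) else 1) *
    (∏ j ∈ p.2, if lam j = 1 then
        ((1 - t1 * t2 * tn n t j) * (1 - t1 * t3 * tn n t j) * (1 - t2 * t3 * tn n t j)) /
        (1 - t0*t1*t2*t3 * t ^ (2 * en n j)) else 1) *
    (∏ j ∈ K, ∏ k ∈ K,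
        if j < k ∧ (eps n p.1 p.2 j + eps n p.1 p.2 k = -2 ∨ eps n p.1 p.2 j + eps n p.1 p.2 k = 1 ∨
              eps n p.1 p.2 j + eps n p.1 p.2 k = 2) ∧
           lam j = 1 ∧ lam k = (if eps n p.1 p.2 k = -1 then 1 else 0)
        then (1 - t0*t1*t2*t3 * t ^ (2 * (n : ℤ) + 1 - ((j : ℤ) + 1) - ((k : ℤ) + 1))) /
             (1 - t0*t1*t2*t3 * t ^ (2 * (n : ℤ) - ((j : ℤ) + 1) - ((k : ℤ) + 1))) else 1) *
    (∏ j ∈ p.1 ∪ p.2, ∏ k ∈ K \ p.2,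
        if j < k ∧ (eps n p.1 p.2 k - eps n p.1 p.2 j = 0 ∨ eps n p.1 p.2 k - eps n p.1 p.2 j = 1) ∧
           lam j = (if eps n p.1 p.2 j = -1 then 1 else 0) ∧ lam k = 0
        then (1 - t0*t1*t2*t3 * t ^ (2 * (n : ℤ) - 1 - ((j : ℤ) + 1) - ((k : ℤ) + 1))) /
             (1 - t0*t1*t2*t3 * t ^ (2 * (n : ℤ) - ((j : ℤ) + 1) - ((k : ℤ) + 1))) else 1) *
    (∏ j ∈ K, ∏ k ∈ K,
        if lam j = lam k ∧ eps n p.1 p.2 j > eps n p.1 p.2 k then rat n t j k else 1) *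
    (∏ j ∈ p.2, ∏ k ∈ p.1, if lam j = lam k + 1 then rat n t j k else 1) *
    (∏ j ∈ K, t0 ^ (-(eps n p.1 p.2 j))) *
    (∏ j ∈ K, ∏ k ∈ K,
        if j < k ∧ eps n p.1 p.2 j ≠ eps n p.1 p.2 k ∧ eps n p.1 p.2 k = 0
        then t ^ (-(eps n p.1 p.2 j)) else 1) *
    (∏ j ∈ K, ∏ k ∈ K,
        if j < k ∧ lam j = lam k ∧ eps n p.1 p.2 k - eps n p.1 p.2 j = 1 then t⁻¹ else 1)

/-- the coefficient `W_{J+,J-}(λ)` (four-parameter case). -/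
def W4 (n : ℕ) (t t0 t1 t2 t3 : ℂ) (lam : Fin n → ℤ) (Jp Jm : Finset (Fin n)) : ℂ :=
  (∏ j ∈ Jp, if lam j = 1 then 1 - t0*t1*t2*t3 * t ^ (en n j + (m0c n lam : ℤ)) else 1) *
  pairProd n t lam Jp Jm *
  ∏ j ∈ Jp, if lam j = 0 then
    ((1 - t0*t1*t2*t3 * t ^ (en n j - 1)) *
     (1 - t0*t1*t2*t3 * t ^ (en n j + (m0c n lam : ℤ) + (m1c n lam : ℤ) - (m1p n lam Jp : ℤ))) *
     ((1 - t0 * t1 * tn n t j) * (1 - t0 * t2 * tn n t j) * (1 - t0 * t3 * tn n t j) *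
      (1 - t1 * t2 * tn n t j) * (1 - t1 * t3 * tn n t j) * (1 - t2 * t3 * tn n t j))) /
    ((1 - t0*t1*t2*t3 * t ^ (2 * en n j - 1)) * (1 - t0*t1*t2*t3 * t ^ (2 * en n j)) ^ 2 *
     (1 - t0*t1*t2*t3 * t ^ (2 * en n j + 1)))
  else 1

/-- the difference operator `H_l` (four-parameter case). -/
def H4 (n : ℕ) (t t0 t1 t2 t3 : ℂ) (l : ℕ) (f : Lam n → ℂ) : Lam n → ℂ := fun lam =>
  ∑ p ∈ (univ : Finset (Finset (Fin n) × Finset (Fin n))).filter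
      (fun p => Disjoint p.1 p.2 ∧ p.1.card + p.2.card ≤ l),
    if h : IsPart n (shift n lam.1 p.1 p.2) then
      U4 n t t0 t1 t2 t3 (p.1ᶜ ∩ p.2ᶜ) (l - (p.1.card + p.2.card)) lam.1 *
      W4 n t t0 t1 t2 t3 lam.1 p.1 p.2 * f ⟨_, h⟩
    else 0

/-- the gauge function `h(λ)` (four-parameter case). -/
def h4 (n : ℕ) (t t0 t1 t2 t3 : ℂ) (lam : Fin n → ℤ) : ℂ :=
  ∏ j : Fin n,
    t0 ^ (lam j) * t ^ (en n j * lam j) *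
    (if lam j = 0 then 1 - t0*t1*t2*t3 * t ^ (en n j + (m0c n lam : ℤ) - 1) else 1) *
    (if lam j = 0 then 1 else
      (1 - t1 * t2 * tn n t j) * (1 - t1 * t3 * tn n t j) * (1 - t2 * t3 * tn n t j))

/-- the box `[0, 2π]^n`. -/
def box (n : ℕ) : Set (Fin n → ℝ) := Set.univ.pi fun _ => Set.Icc 0 (2 * Real.pi)


/-- the weighted measure `|Δ(ξ)|² dξ` on the box `[0,2π]^n`. -/
def wmeas (n : ℕ) (t t0 t1 t2 t3 : ℝ) : Measure (Fin n → ℝ) :=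
  ((volume : Measure (Fin n → ℝ)).restrict (box n)).withDensity
    fun xi => ENNReal.ofReal
      ((norm (Dlt n (t : ℂ) (t0 : ℂ) (t1 : ℂ) (t2 : ℂ) (t3 : ℂ)
        (fun j => (xi j : ℂ)))) ^ 2)

/-- the normalization integral `∫_{[0,2π]^n} |P_λ(ξ) Δ(ξ)|² dξ`. -/
def nInt (n : ℕ) (t t0 t1 t2 t3 : ℝ) (lam : Fin n → ℤ) : ℝ :=
  ∫ xi in box n,
    (norm (P n (t : ℂ) (t0 : ℂ) (t1 : ℂ) (t2 : ℂ) (t3 : ℂ) lam (fun j => (xi j : ℂ)) *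
      Dlt n (t : ℂ) (t0 : ℂ) (t1 : ℂ) (t2 : ℂ) (t3 : ℂ) (fun j => (xi j : ℂ)))) ^ 2



/-- pair factor in multiplicative variables. -/
def GG (t y x : ℂ) : ℂ :=
  ((1 - t * (y / x)) * (1 - t * (y * x))) / ((1 - y / x) * (1 - y * x))

/-- one-variable factor. -/
def hh (t0 t1 t2 t3 : ℂ) (l : ℤ) (y : ℂ) : ℂ :=
  (if 0 < l then ((1 - t0 * y) * (1 - t1 * y) * (1 - t2 * y) * (1 - t3 * y)) / (1 - y ^ 2)
    else 1) * y ^ (-l)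

/-- summand in multiplicative variables. -/
def TT (n : ℕ) (t t0 t1 t2 t3 : ℂ) (lam : Fin n → ℤ) (z : Fin n → ℂ) : ℂ :=
  (∏ j : Fin n, ∏ k : Fin n, if j < k then GG t (z j) (z k) else 1) *
  ∏ j : Fin n, hh t0 t1 t2 t3 (lam j) (z j)

/-- sign action. -/
def sg (b : Bool) (x : ℂ) : ℂ := if b then x else x⁻¹

/-- the sum over the hyperoctahedral group. -/
def SS (n : ℕ) (t t0 t1 t2 t3 : ℂ) (lam : Fin n → ℤ) (x : Fin n → ℂ) : ℂ :=
  ∑ w : Equiv.Perm (Fin n) × (Fin n → Bool),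
    TT n t t0 t1 t2 t3 lam (fun j => sg (w.2 j) (x (w.1 j)))

lemma GG_inv (t y x : ℂ) : GG t y x⁻¹ = GG t y x := by
  unfold GG
  rw [div_inv_eq_mul, ← div_eq_mul_inv]
  ring

lemma GG_sg (t y x : ℂ) (b : Bool) : GG t y (sg b x) = GG t y x := by
  cases b <;> simp [sg, GG_inv]

lemma TT_succ (n : ℕ) (t t0 t1 t2 t3 : ℂ) (lam : Fin (n+1) → ℤ) (z : Fin (n+1) → ℂ) :
    TT (n+1) t t0 t1 t2 t3 lam z =
      ((∏ k : Fin n, GG t (z 0) (z k.succ)) * hh t0 t1 t2 t3 (lam 0) (z 0)) *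
      TT n t t0 t1 t2 t3 (fun j => lam j.succ) (fun j => z j.succ) := by
  unfold TT
  rw [Fin.prod_univ_succ, Fin.prod_univ_succ (fun j => hh t0 t1 t2 t3 (lam j) (z j))]
  simp only [Fin.prod_univ_succ (n := n), Fin.succ_lt_succ_iff, Fin.succ_pos, Fin.not_lt_zero,
    if_true, if_false, lt_irrefl, one_mul]
  ring

/-- permutation sending 0 to p and the rest by e. -/
def pe (n : ℕ) (p : Fin (n+1)) (e : Equiv.Perm (Fin n)) : Equiv.Perm (Fin (n+1)) :=
  ((finSuccEquiv' 0).trans (Equiv.optionCongr e)).trans (finSuccEquiv' p).symm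

lemma pe_zero (n : ℕ) (p : Fin (n+1)) (e : Equiv.Perm (Fin n)) : pe n p e 0 = p := by
  simp [pe]

lemma pe_succ (n : ℕ) (p : Fin (n+1)) (e : Equiv.Perm (Fin n)) (j : Fin n) :
    pe n p e j.succ = p.succAbove (e j) := by
  have : (finSuccEquiv' (0 : Fin (n+1))) j.succ = some j := by
    rw [← Fin.succAbove_zero_apply, finSuccEquiv'_succAbove]
  simp [pe, this]

/-- combined decomposition map. -/
def dec (n : ℕ) (q : (Fin (n+1) × Bool) × (Equiv.Perm (Fin n) × (Fin n → Bool))) :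
    Equiv.Perm (Fin (n+1)) × (Fin (n+1) → Bool) :=
  (pe n q.1.1 q.2.1, Fin.cons q.1.2 q.2.2)

lemma dec_bij (n : ℕ) : Function.Bijective (dec n) := by
  rw [Fintype.bijective_iff_injective_and_card]
  constructor
  · rintro ⟨⟨p, b⟩, e, s⟩ ⟨⟨p', b'⟩, e', s'⟩ h
    simp only [dec, Prod.mk.injEq] at h
    obtain ⟨h1, h2⟩ := h
    have hp : p = p' := by
      have := DFunLike.congr_fun h1 0
      simpa [pe_zero] using this
    subst hp
    have he : e = e' := by
      ext1 j
      have := DFunLike.congr_fun h1 j.succ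
      simpa [pe_succ] using this
    have := Fin.cons_injective2 h2
    simp [he, this.1, this.2]
  · simp [Fintype.card_perm, Nat.factorial_succ, pow_succ]
    ring

lemma SS_succ (n : ℕ) (t t0 t1 t2 t3 : ℂ) (lam : Fin (n+1) → ℤ) (x : Fin (n+1) → ℂ) :
    SS (n+1) t t0 t1 t2 t3 lam x =
      ∑ q : Fin (n+1) × Bool,
        ((∏ k : Fin n, GG t (sg q.2 (x q.1)) (x (q.1.succAbove k))) *
          hh t0 t1 t2 t3 (lam 0) (sg q.2 (x q.1))) *
        SS n t t0 t1 t2 t3 (fun j => lam j.succ) (fun j => x (q.1.succAbove j)) := by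
  unfold SS
  rw [← (dec_bij n).sum_comp]
  rw [Fintype.sum_prod_type]
  refine Finset.sum_congr rfl fun q _ => ?_
  rw [Finset.mul_sum]
  refine Finset.sum_congr rfl fun w _ => ?_
  rw [TT_succ]
  simp only [dec, pe_zero, pe_succ, Fin.cons_zero, Fin.cons_succ, GG_sg]
  rw [Equiv.prod_comp w.1 (fun k => GG t (sg q.2 (x q.1)) (x (q.1.succAbove k)))]

/-- geometric progression. -/
def gp (n : ℕ) (t b : ℂ) : Fin n → ℂ := fun j => b * t ^ (j.rev : ℕ)

lemma tele1 (t c : ℂ) (h : ∀ k : ℕ, 1 - c * t ^ k ≠ 0) (n : ℕ) :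
    ∏ j : Fin n, (1 - t * (c * t ^ (j : ℕ))) / (1 - c * t ^ (j : ℕ)) =
      (1 - c * t ^ n) / (1 - c) := by
  have h0 := h 0
  simp only [pow_zero, mul_one] at h0
  induction n with
  | zero => simp [h0]
  | succ n ih =>
    rw [Fin.prod_univ_castSucc]
    simp only [Fin.val_castSucc, Fin.val_last, ih]
    have := h n
    field_simp
    ring

lemma tele2 (t b : ℂ) (ht : t ≠ 0) (hb : b ≠ 0) (h : ∀ k : ℕ, 1 - b ^ 2 * t ^ k ≠ 0) (n : ℕ) :
    ∏ j : Fin n, (1 - t * (b⁻¹ / (b * t ^ ((j : ℕ) + 1)))) / (1 - b⁻¹ / (b * t ^ ((j : ℕ) + 1))) =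
      t ^ n * (1 - b ^ 2) / (1 - b ^ 2 * t ^ n) := by
  have h0 := h 0
  simp only [pow_zero, mul_one] at h0
  induction n with
  | zero => simp [h0]
  | succ n ih =>
    rw [Fin.prod_univ_castSucc]
    simp only [Fin.val_castSucc, Fin.val_last, ih]
    have h1 := h n
    have h2 := h (n+1)
    have h3 : 1 - b⁻¹ / (b * t ^ (n + 1)) = -(1 - b ^ 2 * t ^ (n+1)) / (b ^ 2 * t ^ (n+1)) := by
      field_simp
      ring
    have h4 : 1 - t * (b⁻¹ / (b * t ^ (n + 1))) = -(1 - b ^ 2 * t ^ n) / (b ^ 2 * t ^ n) := by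
      field_simp
      ring
    rw [h3, h4]
    generalize 1 - b ^ 2 * t ^ n = X at h1 ⊢
    generalize 1 - b ^ 2 * t ^ (n + 1) = Y at h2 ⊢
    field_simp

lemma prodA (n : ℕ) (t b : ℂ) (ht : t ≠ 0) (hb : b ≠ 0) (hq : ∀ k : ℕ, 1 - t ^ (k+1) ≠ 0)
    (h : ∀ k : ℕ, 1 - b ^ 2 * t ^ k ≠ 0) :
    ∏ k : Fin n, GG t (b * t ^ n) (gp n t b k) =
      (1 - t ^ (n+1)) / (1 - t) * ((1 - b ^ 2 * t ^ n * t ^ n) / (1 - b ^ 2 * t ^ n)) := by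
  have e1 := tele1 t t (fun k => by rw [← pow_succ']; exact hq k) n
  have e2 := tele1 t (b ^ 2 * t ^ n) (fun k => by rw [mul_assoc, ← pow_add]; exact h _) n
  rw [pow_succ', ← e1, ← e2, ← Equiv.prod_comp Fin.revPerm (fun j : Fin n =>
    (1 - t * (b ^ 2 * t ^ n * t ^ (j : ℕ))) / (1 - b ^ 2 * t ^ n * t ^ (j : ℕ))),
    ← Finset.prod_mul_distrib]
  refine Finset.prod_congr rfl fun j _ => ?_
  have e3 : b * t ^ n / gp n t b j = t * t ^ (j : ℕ) := by
    have : n = (j : ℕ) + 1 + (j.rev : ℕ) := by rw [Fin.val_rev]; omega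
    unfold gp
    rw [div_eq_iff (mul_ne_zero hb (pow_ne_zero _ ht))]
    conv_lhs => rw [this]
    ring
  have e4 : b * t ^ n * gp n t b j = b ^ 2 * t ^ n * t ^ (j.rev : ℕ) := by
    unfold gp; ring
  unfold GG
  rw [e3, e4, Fin.revPerm_apply, mul_div_mul_comm]

lemma prodB (n : ℕ) (t b : ℂ) (ht : t ≠ 0) (hb : b ≠ 0) (hq : ∀ k : ℕ, 1 - t ^ (k+1) ≠ 0)
    (h : ∀ k : ℕ, 1 - b ^ 2 * t ^ k ≠ 0) :
    ∏ k : Fin n, GG t b⁻¹ (gp n t (b * t) k) =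
      (1 - t ^ (n+1)) / (1 - t) * (t ^ n * (1 - b ^ 2) / (1 - b ^ 2 * t ^ n)) := by
  have e1 := tele1 t t (fun k => by rw [← pow_succ']; exact hq k) n
  have e2 := tele2 t b ht hb h n
  rw [pow_succ', ← e1, ← e2, ← Finset.prod_mul_distrib]
  rw [← Equiv.prod_comp Fin.revPerm (fun j : Fin n => (1 - t * (t * t ^ (j : ℕ))) /
    (1 - t * t ^ (j : ℕ)) * ((1 - t * (b⁻¹ / (b * t ^ ((j : ℕ) + 1)))) /
    (1 - b⁻¹ / (b * t ^ ((j : ℕ) + 1)))))]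
  refine Finset.prod_congr rfl fun j _ => ?_
  simp only [Fin.revPerm_apply]
  unfold GG gp
  have e3 : b⁻¹ * (b * t * t ^ (j.rev : ℕ)) = t * t ^ (j.rev : ℕ) := by
    field_simp
  have e4 : b * t * t ^ (j.rev : ℕ) = b * t ^ ((j.rev : ℕ) + 1) := by
    rw [pow_succ']; ring
  rw [e3, e4, mul_div_mul_comm, mul_comm]

lemma gp_succ (n : ℕ) (t b : ℂ) (j : Fin n) : gp (n+1) t b j.succ = gp n t b j := by
  simp [gp, Fin.rev_succ]

lemma gp_castSucc (n : ℕ) (t b : ℂ) (j : Fin n) :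
    gp (n+1) t b j.castSucc = gp n t (b * t) j := by
  simp [gp, Fin.rev_castSucc, pow_succ]
  ring

lemma kill (n : ℕ) (t b : ℂ) (ht : t ≠ 0) (hb : b ≠ 0) (p : Fin (n+1)) (s : Bool)
    (h1 : ¬ (p = 0 ∧ s = true)) (h2 : ¬ (p = Fin.last n ∧ s = false)) :
    ∏ k : Fin n, GG t (sg s (gp (n+1) t b p)) (gp (n+1) t b (p.succAbove k)) = 0 := by
  rw [Finset.prod_eq_zero_iff]
  cases s with
  | true =>
    have hp : p ≠ 0 := by simpa using h1
    obtain ⟨q, rfl⟩ := Fin.exists_succ_eq.mpr hp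
    refine ⟨q, Finset.mem_univ _, ?_⟩
    have : q.succ.succAbove q = q.castSucc := by simp
    rw [this, gp_succ, gp_castSucc]
    have : t * (gp n t b q / gp n t (b * t) q) = 1 := by
      unfold gp; field_simp
    simp [GG, sg, this]
  | false =>
    have hp : p ≠ Fin.last n := by simpa using h2
    obtain ⟨q, rfl⟩ := Fin.exists_castSucc_eq.mpr hp
    refine ⟨q, Finset.mem_univ _, ?_⟩
    have : q.castSucc.succAbove q = q.succ := by simp
    rw [this, gp_succ, gp_castSucc]
    have : t * ((gp n t (b * t) q)⁻¹ * gp n t b q) = 1 := by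
      unfold gp; field_simp
    simp [GG, sg, this]

lemma SS_gp (n : ℕ) (t t0 t1 t2 t3 : ℂ) (lam : Fin (n+1) → ℤ) (b : ℂ) (ht : t ≠ 0) (hb : b ≠ 0)
    (hq : ∀ k : ℕ, 1 - t ^ (k+1) ≠ 0) (h : ∀ k : ℕ, 1 - b ^ 2 * t ^ k ≠ 0) :
    SS (n+1) t t0 t1 t2 t3 lam (gp (n+1) t b) =
      (1 - t ^ (n+1)) / (1 - t) * ((1 - b ^ 2 * t ^ n * t ^ n) / (1 - b ^ 2 * t ^ n)) *
        hh t0 t1 t2 t3 (lam 0) (b * t ^ n) *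
        SS n t t0 t1 t2 t3 (fun j => lam j.succ) (gp n t b) +
      (1 - t ^ (n+1)) / (1 - t) * (t ^ n * (1 - b ^ 2) / (1 - b ^ 2 * t ^ n)) *
        hh t0 t1 t2 t3 (lam 0) b⁻¹ *
        SS n t t0 t1 t2 t3 (fun j => lam j.succ) (gp n t (b * t)) := by
  rw [SS_succ, Fintype.sum_prod_type]
  simp only [Fintype.sum_bool]
  rw [Finset.sum_add_distrib, Finset.sum_eq_single 0, Finset.sum_eq_single (Fin.last n)]
  · have z0 : gp (n+1) t b 0 = b * t ^ n := by simp [gp]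
    have zl : gp (n+1) t b (Fin.last n) = b := by simp [gp]
    simp only [z0, zl, sg, Fin.succAbove_zero_apply, Fin.succAbove_last_apply, gp_succ, gp_castSucc,
      if_true, Bool.false_eq_true, if_false]
    rw [prodA n t b ht hb hq h, prodB n t b ht hb hq h]
  · intro p _ hp
    rw [kill n t b ht hb p false (by simp) (by simpa using hp)]
    simp
  · simp
  · intro p _ hp
    rw [kill n t b ht hb p true (by simpa using hp) (by simp)]
    simp
  · simp

lemma SS_zero (n : ℕ) (t t0 t1 t2 t3 : ℂ) (lam : Fin n → ℤ) (hl : ∀ j, lam j = 0) (b : ℂ)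
    (ht : t ≠ 0) (hb : b ≠ 0)
    (hq : ∀ k : ℕ, 1 - t ^ (k+1) ≠ 0) (h : ∀ k : ℕ, 1 - b ^ 2 * t ^ k ≠ 0)
    (h' : ∀ m k : ℕ, 1 - (b * t ^ m) ^ 2 * t ^ k ≠ 0) :
    SS n t t0 t1 t2 t3 lam (gp n t b) =
      ∏ j : Fin n, (1 - t ^ ((j : ℕ) + 1)) / (1 - t) * (1 + t ^ (j : ℕ)) := by
  induction n generalizing b with
  | zero => simp [SS, TT]
  | succ n ih =>
    rw [SS_gp n t t0 t1 t2 t3 lam b ht hb hq h]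
    have hbt : ∀ m k : ℕ, 1 - (b * t * t ^ m) ^ 2 * t ^ k ≠ 0 := by
      intro m k
      have := h' (m+1) k
      rwa [pow_succ' t m, ← mul_assoc] at this
    rw [ih _ (fun j => hl _) b hb h h',
      ih _ (fun j => hl _) (b * t) (mul_ne_zero hb ht) (by simpa using hbt 0) hbt,
      Fin.prod_univ_castSucc]
    have h1 := h n
    have h2 : 1 - t ≠ 0 := by simpa using hq 0
    simp only [hh, hl, lt_irrefl, if_false, neg_zero, zpow_zero, mul_one, Fin.val_castSucc,
      Fin.val_last]
    field_simp
    ring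

lemma SS_main (n : ℕ) (t t0 t1 t2 t3 : ℂ) (lam : Fin n → ℤ) (hl : IsPart n lam)
    (ht : t ≠ 0) (hb : t0 ≠ 0)
    (hq : ∀ k : ℕ, 1 - t ^ (k+1) ≠ 0)
    (h' : ∀ m k : ℕ, 1 - (t0 * t ^ m) ^ 2 * t ^ k ≠ 0) :
    SS n t t0 t1 t2 t3 lam (gp n t t0) =
      (∏ j : Fin n, (1 - t ^ ((j : ℕ) + 1)) / (1 - t)) *
      ∏ j : Fin n, (if lam j = 0 then 1 + t ^ (j.rev : ℕ) else
        (1 - t0 * t1 * t ^ (j.rev : ℕ)) * (1 - t0 * t2 * t ^ (j.rev : ℕ)) *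
        (1 - t0 * t3 * t ^ (j.rev : ℕ))) * (t0 * t ^ (j.rev : ℕ)) ^ (- lam j) := by
  have h : ∀ k : ℕ, 1 - t0 ^ 2 * t ^ k ≠ 0 := by simpa using h' 0
  induction n with
  | zero => simp [SS, TT]
  | succ n ih =>
    by_cases h0 : lam 0 = 0
    · have hz : ∀ j, lam j = 0 := fun j => le_antisymm (h0 ▸ hl.1 0 j (Fin.zero_le j)) (hl.2 j)
      rw [SS_zero _ t t0 t1 t2 t3 lam hz t0 ht hb hq h h', Finset.prod_mul_distrib]
      congr 1
      rw [← Equiv.prod_comp Fin.revPerm]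
      simp [hz]
    · have hpos : 0 < lam 0 := lt_of_le_of_ne (hl.2 0) (Ne.symm h0)
      rw [SS_gp n t t0 t1 t2 t3 lam t0 ht hb hq h,
        ih (fun j => lam j.succ) ⟨fun i j hij => hl.1 _ _ (Fin.succ_le_succ_iff.mpr hij),
          fun i => hl.2 _⟩]
      have hk : hh t0 t1 t2 t3 (lam 0) t0⁻¹ = 0 := by
        simp [hh, hpos, hb]
      rw [hk, Fin.prod_univ_castSucc, Fin.prod_univ_succ
        (fun j : Fin (n+1) => (if lam j = 0 then 1 + t ^ (j.rev : ℕ) else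
        (1 - t0 * t1 * t ^ (j.rev : ℕ)) * (1 - t0 * t2 * t ^ (j.rev : ℕ)) *
        (1 - t0 * t3 * t ^ (j.rev : ℕ))) * (t0 * t ^ (j.rev : ℕ)) ^ (- lam j))]
      have h1 := h n
      have h2 : 1 - t ≠ 0 := by simpa using hq 0
      have h3 : 1 - (t0 * t ^ n) ^ 2 ≠ 0 := by simpa using h' n 0
      have h4 : (1 - t0 ^ 2 * t ^ n * t ^ n) / (1 - t0 ^ 2 * t ^ n) *
          hh t0 t1 t2 t3 (lam 0) (t0 * t ^ n) =
          (1 - t0 * t1 * t ^ n) * (1 - t0 * t2 * t ^ n) *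
          (1 - t0 * t3 * t ^ n) * (t0 * t ^ n) ^ (- lam 0) := by
        have h5 : 1 - t0 ^ 2 * t ^ n * t ^ n = 1 - (t0 * t ^ n) ^ 2 := by ring
        rw [h5, hh, if_pos hpos, ← mul_assoc]
        congr 1
        rw [div_mul_div_comm, div_eq_iff (mul_ne_zero h1 h3)]
        ring
      rw [mul_assoc ((1 - t ^ (n+1)) / (1 - t)), h4]
      simp only [Fin.val_castSucc, Fin.val_last, Fin.rev_succ, Fin.rev_zero, if_neg h0]
      ring

lemma Cf_eq (n : ℕ) (t t0 t1 t2 t3 : ℂ) (lam : Fin n → ℤ) (xi : Fin n → ℂ) :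
    Cf n t t0 t1 t2 t3 lam xi * exp (-I * ∑ j : Fin n, (lam j : ℂ) * xi j) =
      TT n t t0 t1 t2 t3 lam (fun j => exp (I * xi j)) := by
  have e : exp (-I * ∑ j : Fin n, (lam j : ℂ) * xi j) =
      ∏ j : Fin n, (exp (I * xi j)) ^ (- lam j) := by
    rw [Finset.mul_sum, Complex.exp_sum]
    refine Finset.prod_congr rfl fun j _ => ?_
    rw [← Complex.exp_int_mul]
    congr 1
    push_cast
    ring
  have e2 : ∀ x : ℂ, exp (2 * I * x) = exp (I * x) ^ 2 := fun x => by
    rw [← Complex.exp_nat_mul]; congr 1; push_cast; ring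
  rw [e]
  unfold Cf TT hh GG
  rw [mul_assoc, ← Finset.prod_mul_distrib]
  simp only [mul_sub, mul_add, Complex.exp_sub, Complex.exp_add, e2]

/-- unit principal specialization value `P_λ(iρ) = 1`. -/
theorem principal_specialization (n : ℕ) (hn : 1 ≤ n) (t t0 : ℝ) (t1 t2 t3 : ℂ)
    (ht : 0 < t) (ht1 : t < 1) (ht0 : 0 < t0) (ht0' : t0 < 1)
    (xi : Fin n → ℂ)
    (hxi : xi = fun j : Fin n => Complex.I *
      ((Real.log t0 + ((n : ℝ) - ((j : ℕ) : ℝ) - 1) * Real.log t : ℝ) : ℂ))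
    (hgen : Generic n xi)
    (hden : ∀ j : Fin n,
      (1 - (t : ℂ) ^ ((j : ℤ) + 1)) ≠ 0 ∧ (1 + tn n (t : ℂ) j) ≠ 0 ∧
      (1 - (t0 : ℂ) * t1 * tn n (t : ℂ) j) ≠ 0 ∧ (1 - (t0 : ℂ) * t2 * tn n (t : ℂ) j) ≠ 0 ∧
      (1 - (t0 : ℂ) * t3 * tn n (t : ℂ) j) ≠ 0)
    (lam : Fin n → ℤ) (hlam : IsPart n lam) :
    P n (t : ℂ) (t0 : ℂ) t1 t2 t3 lam xi = 1 := by
  have htc : (t : ℂ) ≠ 0 := by exact_mod_cast ht.ne'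
  have ht0c : (t0 : ℂ) ≠ 0 := by exact_mod_cast ht0.ne'
  have hq : ∀ k : ℕ, 1 - (t : ℂ) ^ (k+1) ≠ 0 := by
    intro k
    have : t ^ (k+1) < 1 := pow_lt_one₀ ht.le ht1 (by omega)
    have h2 : (1 - t ^ (k+1) : ℝ) ≠ 0 := by linarith
    exact_mod_cast h2
  have h' : ∀ m k : ℕ, 1 - ((t0 : ℂ) * (t : ℂ) ^ m) ^ 2 * (t : ℂ) ^ k ≠ 0 := by
    intro m k
    have a1 : t ^ m ≤ 1 := pow_le_one₀ ht.le ht1.le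
    have a2 : t ^ k ≤ 1 := pow_le_one₀ ht.le ht1.le
    have a3 : 0 < t ^ m := pow_pos ht m
    have a4 : 0 < t ^ k := pow_pos ht k
    have a5 : t0 * t ^ m < 1 := by nlinarith
    have a6 : (t0 * t ^ m) ^ 2 < 1 := pow_lt_one₀ (by positivity) a5 (by norm_num)
    have a7 : (t0 * t ^ m) ^ 2 * t ^ k < 1 := by nlinarith [sq_nonneg (t0 * t ^ m)]
    have h2 : (1 - (t0 * t ^ m) ^ 2 * t ^ k : ℝ) ≠ 0 := by linarith
    exact_mod_cast h2
  have hx : ∀ j, exp (-(I * xi j)) = gp n (t : ℂ) (t0 : ℂ) j := by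
    intro j
    have e0 : -(I * xi j) =
        ((Real.log t0 + ((n : ℝ) - ((j : ℕ) : ℝ) - 1) * Real.log t : ℝ) : ℂ) := by
      rw [hxi]
      simp only []
      rw [← mul_assoc, Complex.I_mul_I]
      ring
    have e1 : ((n : ℝ) - ((j : ℕ) : ℝ) - 1) = ((j.rev : ℕ) : ℝ) := by
      have : (j.rev : ℕ) + (j : ℕ) + 1 = n := by rw [Fin.val_rev]; omega
      have : ((j.rev : ℕ) : ℝ) + ((j : ℕ) : ℝ) + 1 = n := by exact_mod_cast this
      linarith
    rw [e0, e1, ← Complex.ofReal_exp, Real.exp_add, Real.exp_log ht0, Real.exp_nat_mul,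
      Real.exp_log ht]
    simp [gp]
  have hS : P n (t : ℂ) (t0 : ℂ) t1 t2 t3 lam xi =
      ccf n t t0 t1 t2 t3 lam * SS n t t0 t1 t2 t3 lam (gp n t t0) := by
    unfold P SS
    congr 1
    refine Finset.sum_congr rfl fun w _ => ?_
    rw [Cf_eq]
    congr 1
    funext j
    rw [← hx]
    unfold act sg
    split_ifs
    · congr 1; ring
    · rw [← Complex.exp_neg]; congr 1; ring
  rw [hS, SS_main n t t0 t1 t2 t3 lam hlam htc ht0c hq h', ccf, ← Finset.prod_mul_distrib,
    ← Finset.prod_mul_distrib]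
  refine Finset.prod_eq_one fun j _ => ?_
  obtain ⟨d1, d2, d3, d4, d5⟩ := hden j
  have een : en n j = ((j.rev : ℕ) : ℤ) := by
    unfold en; rw [Fin.val_rev]; omega
  have etn : tn n (t : ℂ) j = (t : ℂ) ^ (j.rev : ℕ) := by
    unfold tn; rw [een, zpow_natCast]
  rw [etn] at d2 d3 d4 d5 ⊢
  have ez : (t0 : ℂ) ^ lam j * (t : ℂ) ^ (en n j * lam j) =
      ((t0 : ℂ) * (t : ℂ) ^ (j.rev : ℕ)) ^ lam j := by
    rw [een, mul_zpow, zpow_mul, zpow_natCast]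
  have ej : (t : ℂ) ^ ((j : ℤ) + 1) = (t : ℂ) ^ ((j : ℕ) + 1) := by
    exact_mod_cast zpow_natCast (t : ℂ) ((j : ℕ) + 1)
  rw [ez, ej]
  rw [ej] at d1
  have h2 : 1 - (t : ℂ) ≠ 0 := by simpa using hq 0
  have hne : ((t0 : ℂ) * (t : ℂ) ^ (j.rev : ℕ)) ^ lam j ≠ 0 :=
    zpow_ne_zero _ (mul_ne_zero ht0c (pow_ne_zero _ htc))
  rw [zpow_neg]
  generalize ((t0 : ℂ) * (t : ℂ) ^ (j.rev : ℕ)) ^ lam j = A at hne ⊢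
  generalize (t : ℂ) ^ (j.rev : ℕ) = B at d2 d3 d4 d5 ⊢
  generalize 1 - (t0 : ℂ) * t1 * B = X1 at d3 ⊢
  generalize 1 - (t0 : ℂ) * t2 * B = X2 at d4 ⊢
  generalize 1 - (t0 : ℂ) * t3 * B = X3 at d5 ⊢
  split_ifs
  · field_simp
  · field_simp

end QB

end
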